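/- Let n ≥ 6 and 1 ≤ k ≤ n. For every primitive non-powerful signed digraph S of order n, L(S,k) ≤ (2n-k)(n-1) + 1. Moreover, for any integer t with (2n-k)(n-1) - 3 < t < (2n-k)(n-1), there is no primitive non-powerful signed digraph S of order n with L(S,k) = t (a 'gap' in the kth upper base set). -/

import Mathlib

/-- There is a walk of length `l` from `u` to `v` in the digraph with arc relation `A`. -/
def HasWalk {n : ℕ} (A : Fin n → Fin n → Prop) (u v : Fin n) (l : ℕ) : Prop :=
  ∃ f : ℕ → Fin n, f 0 = u ∧ f l = v ∧ ∀ i < l, A (f i) (f (i + 1))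

/-- A digraph is primitive if for some `p > 0` every ordered pair of vertices is
joined by a walk of length exactly `p`. -/
def Primitive {n : ℕ} (A : Fin n → Fin n → Prop) : Prop :=
  ∃ p, 0 < p ∧ ∀ u v : Fin n, HasWalk A u v p

/-- `f` is the vertex sequence of a walk of length `l` from `u` to `v` in `A`. -/
def IsWalkSeq {n : ℕ} (A : Fin n → Fin n → Prop) (f : ℕ → Fin n) (u v : Fin n) (l : ℕ) : Prop :=
  f 0 = u ∧ f l = v ∧ ∀ i < l, A (f i) (f (i + 1))

/-- The sign of (the length-`l` initial part of) the walk with vertex sequence `f`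
in the signed digraph `S`. -/
def walkSign {n : ℕ} (S : Fin n → Fin n → ℤ) (f : ℕ → Fin n) (l : ℕ) : ℤ :=
  ∏ i ∈ Finset.range l, S (f i) (f (i + 1))

/-- The underlying digraph of a signed digraph `S`. -/
def Underlying {n : ℕ} (S : Fin n → Fin n → ℤ) : Fin n → Fin n → Prop :=
  fun u v => S u v ≠ 0

/-- All entries of `S` are in `{0, 1, -1}`: `S` is a sign pattern / signed digraph. -/
def SignPattern {n : ℕ} (S : Fin n → Fin n → ℤ) : Prop :=
  ∀ u v, S u v = 0 ∨ S u v = 1 ∨ S u v = -1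

/-- There is a pair of SSSD walks of length `l` from `u` to `v`: two walks with the
same endpoints and length but different signs. -/
def HasSSSD {n : ℕ} (S : Fin n → Fin n → ℤ) (u v : Fin n) (l : ℕ) : Prop :=
  ∃ f g : ℕ → Fin n, IsWalkSeq (Underlying S) f u v l ∧ IsWalkSeq (Underlying S) g u v l ∧
    walkSign S f l ≠ walkSign S g l

/-- A signed digraph is non-powerful iff it contains a pair of SSSD walks. -/
def NonPowerful {n : ℕ} (S : Fin n → Fin n → ℤ) : Prop :=
  ∃ u v l, HasSSSD S u v l

/-- `exp_D(X)`: the least `p` such that every vertex is reachable from some vertex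
of `X` by a walk of length exactly `p`. -/
noncomputable def setExp {n : ℕ} (A : Fin n → Fin n → Prop) (X : Finset (Fin n)) : ℕ :=
  sInf {p | ∀ v, ∃ x ∈ X, HasWalk A x v p}

/-- `F(D,k)`: the `k`th upper multiexponent. -/
noncomputable def upperMultiexp {n : ℕ} (A : Fin n → Fin n → Prop) (k : ℕ) : ℕ :=
  sSup {e | ∃ X : Finset (Fin n), X.card = k ∧ setExp A X = e}

/-- `l_S(X)`: the least `p` such that every vertex admits a pair of SSSD walks of
length `p` from some vertex of `X`. -/
noncomputable def setBase {n : ℕ} (S : Fin n → Fin n → ℤ) (X : Finset (Fin n)) : ℕ :=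
  sInf {p | ∀ v, ∃ x ∈ X, HasSSSD S x v p}

/-- `L(S,k)`: the `k`th upper base. -/
noncomputable def upperBase {n : ℕ} (S : Fin n → Fin n → ℤ) (k : ℕ) : ℕ :=
  sSup {e | ∃ X : Finset (Fin n), X.card = k ∧ setBase S X = e}

/-- Distance from `u` to `v` in the digraph `A`. -/
noncomputable def ddist {n : ℕ} (A : Fin n → Fin n → Prop) (u v : Fin n) : ℕ :=
  sInf {l | HasWalk A u v l}

/-- Diameter of the digraph `A`. -/
noncomputable def diam {n : ℕ} (A : Fin n → Fin n → Prop) : ℕ :=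
  sSup {d | ∃ u v : Fin n, ddist A u v = d}

/-- `f` is the vertex sequence of a cycle of length `p` in `A`: a closed walk of
length `p` whose first `p` vertices are pairwise distinct. -/
def IsCycleSeq {n : ℕ} (A : Fin n → Fin n → Prop) (f : ℕ → Fin n) (p : ℕ) : Prop :=
  0 < p ∧ f p = f 0 ∧ (∀ i < p, A (f i) (f (i + 1))) ∧
    ∀ i < p, ∀ j < p, f i = f j → i = j

/-- The digraph `D₁` on `{1,…,n}` (vertex `i` is index `i-1`): the Hamiltonian cycle
`1→2→⋯→n→1` together with the extra arc `(n-1)→1`. -/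
def D1 (n : ℕ) : Fin n → Fin n → Prop := fun u v =>
  (v.val = u.val + 1) ∨ (u.val = n - 1 ∧ v.val = 0) ∨ (u.val = n - 2 ∧ v.val = 0)

/-- The digraph `D₂`: `D₁` together with the extra arc `(n)→2`. -/
def D2 (n : ℕ) : Fin n → Fin n → Prop := fun u v =>
  D1 n u v ∨ (u.val = n - 1 ∧ v.val = 1)

/-- Isomorphism of digraphs on the same vertex set `Fin n`. -/
def DigraphIso {n : ℕ} (A B : Fin n → Fin n → Prop) : Prop :=
  ∃ e : Fin n ≃ Fin n, ∀ u v, A u v ↔ B (e u) (e v)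

/-!
In a primitive digraph every `k`-set `X` reaches each vertex by a walk of length `(n-k)(n-1)+1`, so
it suffices to find, for each vertex, a pair of SSSD walks ending there. A non-powerful `S` contains
two cycles, of lengths `p` and `q`, such that running the first `q` times and the second `p` times
gives different signs. Unless `{p, q} = {n-1, n}`, this yields pairs of length at most `n(n-1)-4`
ending at every vertex, whence `L(S,k) ≤ (2n-k)(n-1)-3`.

If `{p, q} = {n-1, n}` then `L(S,k) ≤ (2n-k)(n-1)+1`. A further cycle of length below `n-1`,
combined with these two, again yields short pairs. Without such a cycle, `S` is a Hamiltonian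
cycle with at most two consecutive chords, each skipping one vertex. The length and the sign of a
walk are then determined by its end points, the number `a` of turns of length `n` and the number
`b` of turns of length `n-1`. Two walks of the same length between the same vertices but with
different `(a, b)` have `a ≥ n-1` for one of them, and a Frobenius-type count shows that this is
impossible at length `(2n-k)(n-1)-1` from a suitable `k`-set to the last vertex of the cycle.
Hence `(2n-k)(n-1) ≤ L(S,k)`.
-/

variable {n : ℕ} {A : Fin n → Fin n → Prop} {S : Fin n → Fin n → ℤ}

/-! ### Signed walks -/

/-- `SignedWalk S u v l ε`: the signed digraph `S` has a walk from `u` to `v` of length `l` and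
sign `ε`. This inductive form of `IsWalkSeq` and `walkSign` makes concatenation and induction along
a walk available. -/
inductive SignedWalk (S : Fin n → Fin n → ℤ) : Fin n → Fin n → ℕ → ℤ → Prop
  | nil (u : Fin n) : SignedWalk S u u 0 1
  | cons {u v w : Fin n} {l : ℕ} {ε : ℤ} :
      Underlying S u v → SignedWalk S v w l ε → SignedWalk S u w (l + 1) (S u v * ε)

theorem walkSign_add (S : Fin n → Fin n → ℤ) (f : ℕ → Fin n) (l m : ℕ) :
    walkSign S f (l + m) = walkSign S f l * walkSign S (fun i => f (l + i)) m :=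
  Finset.prod_range_add _ _ _

namespace SignedWalk

variable {u v w : Fin n} {l m : ℕ} {ε δ : ℤ}

theorem single (h : Underlying S u v) : SignedWalk S u v 1 (S u v) := by
  simpa using cons h (nil v)

theorem append (h : SignedWalk S u v l ε) (h' : SignedWalk S v w m δ) :
    SignedWalk S u w (l + m) (ε * δ) := by
  induction h with
  | nil u => simpa using h'
  | cons arc _ ih =>
    rw [Nat.add_right_comm, mul_assoc]
    exact cons arc (ih h')

theorem iterate (h : SignedWalk S u u l ε) (a : ℕ) : SignedWalk S u u (a * l) (ε ^ a) := by
  induction a with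
  | zero => simpa using nil u
  | succ a ih =>
    rw [Nat.succ_mul, pow_succ]
    exact ih.append h

theorem sign_ne_zero (h : SignedWalk S u v l ε) : ε ≠ 0 := by
  induction h with
  | nil => exact one_ne_zero
  | cons arc _ ih => exact mul_ne_zero arc ih

theorem of_forall_arc {f : ℕ → Fin n} (hf : ∀ i < l, Underlying S (f i) (f (i + 1))) :
    SignedWalk S (f 0) (f l) l (walkSign S f l) := by
  induction l with
  | zero => simpa [walkSign] using nil (f 0)
  | succ l ih =>
    rw [walkSign, Finset.prod_range_succ]
    exact (ih fun i hi => hf i (by omega)).append (single (hf l (by omega)))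

theorem segment {f : ℕ → Fin n} {i d : ℕ}
    (hf : ∀ j, i ≤ j → j < i + d → Underlying S (f j) (f (j + 1))) :
    SignedWalk S (f i) (f (i + d)) d (walkSign S (fun j => f (i + j)) d) :=
  of_forall_arc (f := fun j => f (i + j)) fun j hj => hf (i + j) (by omega) (by omega)

theorem of_isWalkSeq {f : ℕ → Fin n} (h : IsWalkSeq (Underlying S) f u v l) :
    SignedWalk S u v l (walkSign S f l) := by
  obtain ⟨rfl, rfl, arcs⟩ := h
  exact of_forall_arc arcs

theorem exists_isWalkSeq (h : SignedWalk S u v l ε) :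
    ∃ f, IsWalkSeq (Underlying S) f u v l ∧ walkSign S f l = ε := by
  induction h with
  | nil u => exact ⟨fun _ => u, ⟨rfl, rfl, by simp⟩, by simp [walkSign]⟩
  | @cons u v w l ε arc _ ih =>
    obtain ⟨f, ⟨rfl, hend, arcs⟩, rfl⟩ := ih
    refine ⟨fun i => Nat.casesOn i u f, ⟨rfl, hend, fun i hi => ?_⟩, ?_⟩
    · cases i with
      | zero => exact arc
      | succ i => exact arcs i (by omega)
    · rw [walkSign, Finset.prod_range_succ', mul_comm]
      rfl

end SignedWalk

theorem hasWalk_underlying_iff {u v : Fin n} {l : ℕ} :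
    HasWalk (Underlying S) u v l ↔ ∃ ε, SignedWalk S u v l ε := by
  constructor
  · rintro ⟨f, hf⟩
    exact ⟨_, .of_isWalkSeq hf⟩
  · rintro ⟨ε, h⟩
    obtain ⟨f, hf, -⟩ := h.exists_isWalkSeq
    exact ⟨f, hf⟩

theorem hasSSSD_iff {u v : Fin n} {l : ℕ} :
    HasSSSD S u v l ↔ ∃ ε δ, SignedWalk S u v l ε ∧ SignedWalk S u v l δ ∧ ε ≠ δ := by
  constructor
  · rintro ⟨f, g, hf, hg, hne⟩
    exact ⟨_, _, .of_isWalkSeq hf, .of_isWalkSeq hg, hne⟩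
  · rintro ⟨ε, δ, hε, hδ, hne⟩
    obtain ⟨f, hf, rfl⟩ := hε.exists_isWalkSeq
    obtain ⟨g, hg, rfl⟩ := hδ.exists_isWalkSeq
    exact ⟨f, g, hf, hg, hne⟩

namespace HasSSSD

variable {u v w : Fin n} {l m : ℕ}

theorem prepend (h : HasSSSD S v w m) (hw : HasWalk (Underlying S) u v l) :
    HasSSSD S u w (l + m) := by
  obtain ⟨ε, δ, hε, hδ, hne⟩ := hasSSSD_iff.1 h
  obtain ⟨_, hw⟩ := hasWalk_underlying_iff.1 hw
  exact hasSSSD_iff.2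
    ⟨_, _, hw.append hε, hw.append hδ, fun heq => hne (mul_left_cancel₀ hw.sign_ne_zero heq)⟩

theorem append (h : HasSSSD S u v m) (hw : HasWalk (Underlying S) v w l) :
    HasSSSD S u w (m + l) := by
  obtain ⟨ε, δ, hε, hδ, hne⟩ := hasSSSD_iff.1 h
  obtain ⟨_, hw⟩ := hasWalk_underlying_iff.1 hw
  exact hasSSSD_iff.2
    ⟨_, _, hε.append hw, hδ.append hw, fun heq => hne (mul_right_cancel₀ hw.sign_ne_zero heq)⟩

/-- The two walks spend their detours at opposite ends of the connecting walk. -/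
theorem of_closed_walks {p q a b : ℕ} {ε δ : ℤ} (hu : SignedWalk S u u p ε)
    (hv : SignedWalk S v v q δ) (hw : HasWalk (Underlying S) u v l) (hlen : a * p = b * q)
    (hne : ε ^ a ≠ δ ^ b) : HasSSSD S u v (a * p + l) := by
  obtain ⟨_, hw⟩ := hasWalk_underlying_iff.1 hw
  have after := hw.append (hv.iterate b)
  rw [← hlen, add_comm, mul_comm _ (δ ^ b)] at after
  exact hasSSSD_iff.2 ⟨_, _, (hu.iterate a).append hw, after,
    fun heq => hne (mul_right_cancel₀ hw.sign_ne_zero heq)⟩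

end HasSSSD

/-! ### Walks in digraphs -/

theorem exists_underlying_eq (A : Fin n → Fin n → Prop) :
    ∃ S : Fin n → Fin n → ℤ, Underlying S = A := by
  classical
  exact ⟨fun u v => if A u v then 1 else 0, by ext; simp [Underlying]⟩

namespace HasWalk

variable {u v w : Fin n} {l m : ℕ}

theorem refl (A : Fin n → Fin n → Prop) (u : Fin n) : HasWalk A u u 0 :=
  ⟨fun _ => u, rfl, rfl, by simp⟩

-- Every digraph underlies a signed one, so unsigned walks inherit the operations on signed walks.
theorem trans (h : HasWalk A u v l) (h' : HasWalk A v w m) : HasWalk A u w (l + m) := by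
  obtain ⟨S, rfl⟩ := exists_underlying_eq A
  obtain ⟨_, h⟩ := hasWalk_underlying_iff.1 h
  obtain ⟨_, h'⟩ := hasWalk_underlying_iff.1 h'
  exact hasWalk_underlying_iff.2 ⟨_, h.append h'⟩

theorem single (h : A u v) : HasWalk A u v 1 := by
  obtain ⟨S, rfl⟩ := exists_underlying_eq A
  exact hasWalk_underlying_iff.2 ⟨_, .single h⟩

theorem segment {f : ℕ → Fin n} {i d : ℕ} (hf : ∀ j, i ≤ j → j < i + d → A (f j) (f (j + 1))) :
    HasWalk A (f i) (f (i + d)) d :=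
  ⟨fun j => f (i + j), rfl, rfl, fun j hj => hf (i + j) (by omega) (by omega)⟩

theorem exists_of_add (h : HasWalk A u v (l + m)) : ∃ w, HasWalk A u w l ∧ HasWalk A w v m := by
  obtain ⟨f, rfl, rfl, arcs⟩ := h
  exact ⟨f l, ⟨f, rfl, rfl, fun i hi => arcs i (by omega)⟩, segment fun j _ hj => arcs j hj⟩

theorem reflTransGen_of_mul {a s : ℕ} (h : HasWalk A u v (a * s)) :
    Relation.ReflTransGen (fun x y => HasWalk A x y s) u v := by
  induction a generalizing u with
  | zero =>
    obtain ⟨f, rfl, hv, -⟩ := h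
    rw [← hv, Nat.zero_mul]
  | succ a ih =>
    rw [Nat.succ_mul, Nat.add_comm] at h
    obtain ⟨w, hw, h⟩ := h.exists_of_add
    exact .head hw (ih h)

end HasWalk

theorem hasWalk_one_iff {u v : Fin n} : HasWalk A u v 1 ↔ A u v := by
  refine ⟨?_, .single⟩
  rintro ⟨f, rfl, rfl, arcs⟩
  exact arcs 0 one_pos

namespace Primitive

theorem exists_arc_to (hA : Primitive A) (v : Fin n) : ∃ u, A u v := by
  obtain ⟨p, hp, h⟩ := hA
  obtain ⟨p, rfl⟩ := Nat.exists_eq_add_of_le' hp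
  obtain ⟨u, -, hu⟩ := (h v v).exists_of_add
  exact ⟨u, hasWalk_one_iff.1 hu⟩

theorem eventually_hasWalk (hA : Primitive A) :
    ∀ᶠ l in Filter.atTop, ∀ u v, HasWalk A u v l := by
  have exists_arc := hA.exists_arc_to
  obtain ⟨p, -, h⟩ := hA
  refine Filter.eventually_atTop.2 ⟨p, fun l hl => ?_⟩
  induction l, hl using Nat.le_induction with
  | base => exact h
  | succ l _ ih =>
    intro u v
    obtain ⟨w, hw⟩ := exists_arc v
    exact (ih u w).trans (.single hw)

end Primitive

/-! ### Expansion in strongly connected relations -/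

/-- Strong connectivity of a digraph, given by its arc relation. It is applied both to the arcs of a
digraph and to the pairs joined by a walk of a fixed length. -/
def StronglyConnected {V : Type*} (R : V → V → Prop) : Prop :=
  ∀ u v, Relation.ReflTransGen R u v

namespace StronglyConnected

variable {V : Type*} {R : V → V → Prop}

theorem swap (hR : StronglyConnected R) : StronglyConnected (Function.swap R) :=
  fun u v => Relation.reflTransGen_swap.2 (hR v u)

theorem eq_univ_of_closed (hR : StronglyConnected R) {T : Set V} (hT : T.Nonempty)
    (closed : ∀ a ∈ T, ∀ b, R a b → b ∈ T) : T = Set.univ := by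
  obtain ⟨a, ha⟩ := hT
  refine Set.eq_univ_of_forall fun b => ?_
  induction hR a b with
  | refl => exact ha
  | tail _ hbc ih => exact closed _ ih _ hbc

theorem min_card_le_ncard [Finite V] (hR : StronglyConnected R) {T : ℕ → Set V}
    (mono : ∀ i, T i ⊆ T (i + 1)) (nonempty : (T 0).Nonempty)
    (step : ∀ i, ∀ a ∈ T i, ∀ b, R a b → b ∈ T (i + 1)) (i : ℕ) :
    min (Nat.card V) ((T 0).ncard + i) ≤ (T i).ncard := by
  induction i with
  | zero => exact min_le_right _ _
  | succ i ih =>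
    by_cases hsub : T (i + 1) ⊆ T i
    · have stable : T i = T (i + 1) := (mono i).antisymm hsub
      have full : T i = Set.univ :=
        hR.eq_univ_of_closed (nonempty.mono (monotone_nat_of_le_succ mono i.zero_le))
          fun a ha b hab => hsub (step i a ha b hab)
      rw [← stable, full, Set.ncard_univ]
      exact min_le_left _ _
    · have : (T i).ncard < (T (i + 1)).ncard := Set.ncard_lt_ncard ⟨mono i, hsub⟩
      omega

theorem eq_univ_of_card_le [Finite V] (hR : StronglyConnected R) {T : ℕ → Set V}
    (mono : ∀ i, T i ⊆ T (i + 1)) (nonempty : (T 0).Nonempty)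
    (step : ∀ i, ∀ a ∈ T i, ∀ b, R a b → b ∈ T (i + 1)) {i : ℕ}
    (hi : Nat.card V ≤ (T 0).ncard + i) : T i = Set.univ := by
  have := hR.min_card_le_ncard mono nonempty step i
  refine Set.eq_of_subset_of_ncard_le (Set.subset_univ _) ?_
  rw [Set.ncard_univ]
  omega

theorem exists_hasWalk_le (hA : StronglyConnected A) (u v : Fin n) :
    ∃ d ≤ n - 1, HasWalk A u v d := by
  let T (i : ℕ) : Set (Fin n) := {v | ∃ d ≤ i, HasWalk A u v d}
  have start : (T 0).Nonempty := ⟨u, 0, le_rfl, .refl A u⟩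
  have full : T (n - 1) = Set.univ := by
    refine hA.eq_univ_of_card_le (T := T) (fun i v ⟨d, hd, h⟩ => ⟨d, by omega, h⟩) start
      (fun i a ⟨d, hd, h⟩ b hab => ⟨d + 1, by omega, h.trans (.single hab)⟩) ?_
    have := (Set.ncard_pos (Set.toFinite _)).2 start
    rw [Nat.card_fin]
    omega
  exact Set.eq_univ_iff_forall.1 full v

end StronglyConnected

namespace Primitive

theorem stronglyConnected_hasWalk (hA : Primitive A) {s : ℕ} (hs : 0 < s) :
    StronglyConnected fun u v => HasWalk A u v s := by
  obtain ⟨N, hN⟩ := Filter.eventually_atTop.1 hA.eventually_hasWalk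
  exact fun u v => (hN (N * s) (Nat.le_mul_of_pos_right N hs) u v).reflTransGen_of_mul

theorem stronglyConnected (hA : Primitive A) : StronglyConnected A := by
  simpa only [hasWalk_one_iff] using hA.stronglyConnected_hasWalk one_pos

theorem exists_mem_hasWalk (hA : Primitive A) {w : Fin n} {s : ℕ} (hs : 0 < s)
    (hw : HasWalk A w w s) {X : Finset (Fin n)} (hX : X.Nonempty) :
    ∃ x ∈ X, HasWalk A x w ((n - X.card) * s) := by
  by_contra! avoid
  let T (i : ℕ) : Set (Fin n) := {x | HasWalk A x w (i * s)}
  have start : (T 0).Nonempty := ⟨w, by simpa only [T, Set.mem_ofPred_eq, zero_mul] using .refl A w⟩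
  have large := (hA.stronglyConnected_hasWalk hs).swap.min_card_le_ncard (T := T)
    (fun i x hx => by simpa only [T, Set.mem_ofPred_eq, Nat.succ_mul] using hx.trans hw) start
    (fun i a ha b hba => by
      simpa only [T, Set.mem_ofPred_eq, Nat.succ_mul, Nat.add_comm] using hba.trans ha)
    (n - X.card)
  have small : (T (n - X.card)).ncard ≤ n - X.card := by
    have disjoint : T (n - X.card) ⊆ ↑Xᶜ := fun x hx =>
      Finset.mem_coe.2 (Finset.mem_compl.2 fun hxX => avoid x hxX hx)
    simpa only [Set.ncard_coe_finset, Finset.card_compl, Fintype.card_fin] using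
      Set.ncard_le_ncard disjoint
  have := (Set.ncard_pos (Set.toFinite _)).2 start
  have := hX.card_pos
  have := w.pos
  rw [Nat.card_fin] at large
  omega

end Primitive

/-! ### Cycles -/

/-- The vertex set of the cycle of length `p` with vertex sequence `f`. -/
def cycleSupport (f : ℕ → Fin n) (p : ℕ) : Finset (Fin n) :=
  (Finset.range p).image f

theorem mem_cycleSupport {f : ℕ → Fin n} {p : ℕ} {u : Fin n} :
    u ∈ cycleSupport f p ↔ ∃ i < p, f i = u := by
  simp [cycleSupport]

/-- Every vertex is reached from `X` by a walk of length exactly `p`; `setExp A X` is the least such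
`p`. -/
def WalkCovers (A : Fin n → Fin n → Prop) (X : Finset (Fin n)) (p : ℕ) : Prop :=
  ∀ v, ∃ x ∈ X, HasWalk A x v p

namespace IsCycleSeq

variable {f : ℕ → Fin n} {p : ℕ}

theorem card_cycleSupport (hf : IsCycleSeq A f p) : (cycleSupport f p).card = p := by
  obtain ⟨-, -, -, inj⟩ := hf
  rw [cycleSupport, Finset.card_image_of_injOn, Finset.card_range]
  simpa [Set.InjOn] using inj

theorem length_le (hf : IsCycleSeq A f p) : p ≤ n := by
  simpa [hf.card_cycleSupport] using Finset.card_le_univ (cycleSupport f p)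

theorem cycleSupport_nonempty (hf : IsCycleSeq A f p) : (cycleSupport f p).Nonempty :=
  Finset.card_pos.1 (hf.card_cycleSupport.symm ▸ hf.1)

theorem mem_cycleSupport_of_hamiltonian (hf : IsCycleSeq A f n) (v : Fin n) :
    v ∈ cycleSupport f n := by
  have full : cycleSupport f n = Finset.univ :=
    Finset.eq_univ_of_card _ (by rw [hf.card_cycleSupport, Fintype.card_fin])
  exact full ▸ Finset.mem_univ v

theorem exists_arc_to (hf : IsCycleSeq A f p) {u : Fin n} (hu : u ∈ cycleSupport f p) :
    ∃ u' ∈ cycleSupport f p, A u' u := by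
  obtain ⟨i, hi, rfl⟩ := mem_cycleSupport.1 hu
  obtain ⟨-, closed, arcs, -⟩ := hf
  cases i with
  | zero =>
    obtain ⟨p, rfl⟩ := Nat.exists_eq_add_of_le' hi
    exact ⟨f p, mem_cycleSupport.2 ⟨p, by omega, rfl⟩, closed ▸ arcs p (by omega)⟩
  | succ i => exact ⟨f i, mem_cycleSupport.2 ⟨i, by omega, rfl⟩, arcs i (by omega)⟩

theorem signedWalk (hf : IsCycleSeq (Underlying S) f p) {u : Fin n}
    (hu : u ∈ cycleSupport f p) : SignedWalk S u u p (walkSign S f p) := by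
  obtain ⟨i, hi, rfl⟩ := mem_cycleSupport.1 hu
  obtain ⟨-, closed, arcs, -⟩ := hf
  obtain ⟨r, rfl⟩ := Nat.exists_eq_add_of_le hi.le
  have before : SignedWalk S (f 0) (f i) i (walkSign S f i) :=
    .of_forall_arc fun j hj => arcs j (by omega)
  have after := SignedWalk.segment (d := r) fun j (_ : i ≤ j) hj => arcs j hj
  rw [closed] at after
  rw [walkSign_add, mul_comm, add_comm]
  exact after.append before

theorem hasWalk (hf : IsCycleSeq A f p) {u : Fin n} (hu : u ∈ cycleSupport f p) :
    HasWalk A u u p := by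
  obtain ⟨S, rfl⟩ := exists_underlying_eq A
  exact hasWalk_underlying_iff.2 ⟨_, hf.signedWalk hu⟩

theorem walkCovers (hf : IsCycleSeq A f p) (hA : StronglyConnected A) {d : ℕ} (hd : n ≤ p + d) :
    WalkCovers A (cycleSupport f p) d := by
  let T (i : ℕ) : Set (Fin n) := {v | ∃ u ∈ cycleSupport f p, HasWalk A u v i}
  have mono (i : ℕ) : T i ⊆ T (i + 1) := by
    rintro v ⟨u, hu, h⟩
    obtain ⟨u', hu', arc⟩ := hf.exists_arc_to hu
    exact ⟨u', hu', add_comm i 1 ▸ (HasWalk.single arc).trans h⟩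
  have support_subset : ↑(cycleSupport f p) ⊆ T 0 := fun u hu => ⟨u, hu, .refl A u⟩
  have full : T d = Set.univ := by
    refine hA.eq_univ_of_card_le mono (Set.Nonempty.mono support_subset hf.cycleSupport_nonempty)
      (fun i a ⟨u, hu, h⟩ b hab => ⟨u, hu, h.trans (.single hab)⟩) ?_
    have := Set.ncard_le_ncard support_subset
    rw [Set.ncard_coe_finset, hf.card_cycleSupport] at this
    rw [Nat.card_fin]
    omega
  exact Set.eq_univ_iff_forall.1 full

end IsCycleSeq

namespace SignedWalk

theorem exists_split_of_repeated {f : ℕ → Fin n} {u : Fin n} {l : ℕ}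
    (hf : IsWalkSeq (Underlying S) f u u l) {i j : ℕ} (hij : i < j) (hj : j < l)
    (repeated : f i = f j) :
    ∃ (x y : Fin n) (l₁ l₂ : ℕ) (ε₁ ε₂ : ℤ), SignedWalk S x x l₁ ε₁ ∧ SignedWalk S y y l₂ ε₂ ∧
      l₁ < l ∧ l₂ < l ∧ l₁ + l₂ = l ∧ ε₁ * ε₂ = walkSign S f l := by
  obtain ⟨start, finish, arcs⟩ := hf
  obtain ⟨d, rfl⟩ := Nat.exists_eq_add_of_le hij.le
  obtain ⟨r, rfl⟩ := Nat.exists_eq_add_of_le hj.le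
  have before : SignedWalk S (f 0) (f i) i (walkSign S f i) :=
    .of_forall_arc fun m hm => arcs m (by omega)
  have loop := SignedWalk.segment (S := S) (f := f) (i := i) (d := d)
    fun m _ hm => arcs m (by omega)
  have after := SignedWalk.segment (S := S) (f := f) (i := i + d) (d := r)
    fun m _ hm => arcs m hm
  rw [← repeated] at loop after
  rw [finish, ← start] at after
  refine ⟨_, _, _, _, _, _, loop, before.append after, by omega, by omega, by omega, ?_⟩
  rw [walkSign_add, walkSign_add]
  ring

theorem closed_induction {P : ℕ → ℤ → Prop} (nil : P 0 1)
    (append : ∀ {l₁ l₂ ε₁ ε₂}, P l₁ ε₁ → P l₂ ε₂ → P (l₁ + l₂) (ε₁ * ε₂))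
    (cycle : ∀ {f p}, IsCycleSeq (Underlying S) f p → P p (walkSign S f p))
    {u : Fin n} {l : ℕ} {ε : ℤ} (h : SignedWalk S u u l ε) : P l ε := by
  induction l using Nat.strong_induction_on generalizing u ε with
  | _ l ih =>
    obtain ⟨f, hf, rfl⟩ := h.exists_isWalkSeq
    rcases Nat.eq_zero_or_pos l with rfl | hl
    · simpa [walkSign] using nil
    by_cases inj : ∀ i < l, ∀ j < l, f i = f j → i = j
    · exact cycle ⟨hl, hf.2.1.trans hf.1.symm, hf.2.2, inj⟩
    obtain ⟨i, j, hij, hj, repeated⟩ : ∃ i j, i < j ∧ j < l ∧ f i = f j := by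
      push Not at inj
      obtain ⟨i, hi, j, hj, heq, hne⟩ := inj
      rcases hne.lt_or_gt with h | h
      · exact ⟨i, j, h, hj, heq⟩
      · exact ⟨j, i, h, hi, heq.symm⟩
    obtain ⟨x, y, l₁, l₂, ε₁, ε₂, h₁, h₂, hl₁, hl₂, rfl, hε⟩ :=
      exists_split_of_repeated hf hij hj repeated
    exact hε ▸ append (ih _ hl₁ h₁) (ih _ hl₂ h₂)

end SignedWalk

namespace Primitive

theorem exists_isCycleSeq_not_dvd (hA : Primitive A) (u : Fin n) {d : ℕ} (hd : d ≠ 1) :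
    ∃ f p, IsCycleSeq A f p ∧ ¬ d ∣ p := by
  obtain ⟨S, rfl⟩ := exists_underlying_eq A
  by_contra! all_dvd
  have dvd_closed {l : ℕ} (h : HasWalk (Underlying S) u u l) : d ∣ l := by
    obtain ⟨_, h⟩ := hasWalk_underlying_iff.1 h
    exact h.closed_induction (P := fun l _ => d ∣ l) (dvd_zero d) dvd_add (all_dvd _ _)
  obtain ⟨N, hN⟩ := Filter.eventually_atTop.1 hA.eventually_hasWalk
  have dvd_length : d ∣ N := dvd_closed (hN N le_rfl u u)
  have dvd_succ : d ∣ N + 1 := dvd_closed (hN (N + 1) N.le_succ u u)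
  exact hd (Nat.dvd_one.1 ((Nat.dvd_add_right dvd_length).1 dvd_succ))

theorem walkCovers (hA : Primitive A) {X : Finset (Fin n)} (hX : X.Nonempty) :
    WalkCovers A X ((n - X.card) * (n - 1) + 1) := by
  intro v
  have hXn : X.card ≤ n := by simpa using X.card_le_univ
  have := hX.card_pos
  rcases hXn.eq_or_lt with hfull | hlt
  · obtain rfl : X = Finset.univ := Finset.eq_univ_of_card X (by simpa using hfull)
    obtain ⟨u, hu⟩ := hA.exists_arc_to v
    exact ⟨u, Finset.mem_univ u, by simpa using HasWalk.single hu⟩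
  obtain ⟨f, s, hf, hs⟩ := hA.exists_isCycleSeq_not_dvd v (d := n) (by omega)
  have hsn : s < n := hf.length_le.lt_of_ne fun h => hs (h ▸ dvd_rfl)
  obtain ⟨r, hr⟩ : ∃ r, n - 1 = s + r := Nat.exists_eq_add_of_le (by omega)
  have long : n ≤ s + ((n - X.card) * r + 1) := by
    have : r ≤ (n - X.card) * r := Nat.le_mul_of_pos_left r (by omega)
    omega
  obtain ⟨w, hw, hwv⟩ := hf.walkCovers hA.stronglyConnected long v
  obtain ⟨x, hx, hxw⟩ := hA.exists_mem_hasWalk hf.1 (hf.hasWalk hw) hX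
  refine ⟨x, hx, ?_⟩
  rw [hr, mul_add, add_assoc]
  exact hxw.trans hwv

end Primitive

/-! ### Sets from which every vertex has a pair of SSSD walks -/

/-- Every vertex is the end of a pair of SSSD walks of length `p` from some vertex of `X`;
`setBase S X` is the least such `p`. -/
def SSSDCovers (S : Fin n → Fin n → ℤ) (X : Finset (Fin n)) (p : ℕ) : Prop :=
  ∀ v, ∃ x ∈ X, HasSSSD S x v p

theorem SSSDCovers.mono (hP : Primitive (Underlying S)) {X : Finset (Fin n)} {p q : ℕ}
    (h : SSSDCovers S X p) (hpq : p ≤ q) : SSSDCovers S X q := by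
  induction q, hpq using Nat.le_induction with
  | base => exact h
  | succ q _ ih =>
    intro v
    obtain ⟨u, hu⟩ := hP.exists_arc_to v
    obtain ⟨x, hx, hxu⟩ := ih u
    exact ⟨x, hx, hxu.append (.single hu)⟩

theorem SSSDCovers.prepend {X Y : Finset (Fin n)} {l m : ℕ} (h : SSSDCovers S Y m)
    (hX : WalkCovers (Underlying S) X l) : SSSDCovers S X (l + m) := by
  intro v
  obtain ⟨y, -, hy⟩ := h v
  obtain ⟨x, hx, hxy⟩ := hX y
  exact ⟨x, hx, hy.prepend hxy⟩

theorem HasSSSD.exists_of_le (hP : Primitive (Underlying S)) {u v : Fin n} {l m : ℕ}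
    (h : HasSSSD S u v l) (hlm : l ≤ m) : ∃ w, HasSSSD S w v m := by
  induction m, hlm using Nat.le_induction with
  | base => exact ⟨u, h⟩
  | succ m _ ih =>
    obtain ⟨w, hw⟩ := ih
    obtain ⟨w', arc⟩ := hP.exists_arc_to w
    exact ⟨w', add_comm 1 m ▸ hw.prepend (.single arc)⟩

theorem HasSSSD.sssdCovers (hP : Primitive (Underlying S)) {u v : Fin n} {l : ℕ}
    (h : HasSSSD S u v l) : SSSDCovers S Finset.univ (l + (n - 1)) := by
  intro w
  obtain ⟨d, hd, hvw⟩ := hP.stronglyConnected.exists_hasWalk_le v w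
  obtain ⟨x, hx⟩ := (h.append hvw).exists_of_le hP (Nat.add_le_add_left hd l)
  exact ⟨x, Finset.mem_univ x, hx⟩

/-! ### Distinguished cycle pairs -/

/-- Two cycles, with vertex sequences `f`, `g` and lengths `p`, `q`, form a distinguished pair when
running the first `q` times and the second `p` times gives different signs. -/
structure DistinguishedCyclePair (S : Fin n → Fin n → ℤ) (f : ℕ → Fin n) (p : ℕ)
    (g : ℕ → Fin n) (q : ℕ) : Prop where
  left : IsCycleSeq (Underlying S) f p
  right : IsCycleSeq (Underlying S) g q
  sign_pow_ne : walkSign S f p ^ q ≠ walkSign S g q ^ p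

theorem exists_distinguishedCyclePair (hP : Primitive (Underlying S)) (hN : NonPowerful S) :
    ∃ f p g q, DistinguishedCyclePair S f p g q := by
  by_contra! none
  have cycle_cycle {f g : ℕ → Fin n} {p q : ℕ} (hf : IsCycleSeq (Underlying S) f p)
      (hg : IsCycleSeq (Underlying S) g q) : walkSign S f p ^ q = walkSign S g q ^ p :=
    by_contra fun hne => none f p g q ⟨hf, hg, hne⟩
  have closed_cycle {u : Fin n} {g : ℕ → Fin n} {l q : ℕ} {ε : ℤ} (h : SignedWalk S u u l ε)
      (hg : IsCycleSeq (Underlying S) g q) : ε ^ q = walkSign S g q ^ l :=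
    h.closed_induction (P := fun l ε => ε ^ q = walkSign S g q ^ l) (by simp)
      (fun h₁ h₂ => by rw [mul_pow, h₁, h₂, pow_add]) fun hf => cycle_cycle hf hg
  have closed_closed {u v : Fin n} {l m : ℕ} {ε δ : ℤ} (h : SignedWalk S u u l ε)
      (h' : SignedWalk S v v m δ) : ε ^ m = δ ^ l :=
    h.closed_induction (P := fun l ε => ε ^ m = δ ^ l) (by simp)
      (fun h₁ h₂ => by rw [mul_pow, h₁, h₂, pow_add]) fun hf => (closed_cycle h' hf).symm
  obtain ⟨u, v, l, h⟩ := hN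
  obtain ⟨N, hN⟩ := Filter.eventually_atTop.1 hP.eventually_hasWalk
  obtain ⟨ε, δ, hε, hδ, hne⟩ := hasSSSD_iff.1 (h.append (hN N le_rfl v u))
  obtain ⟨θ, hθ⟩ := hasWalk_underlying_iff.1 (hN (l + N + 1) (by omega) u u)
  have pow_eq : ε ^ (l + N) = δ ^ (l + N) := closed_closed hε hδ
  have pow_succ_eq : ε ^ (l + N + 1) = δ ^ (l + N + 1) :=
    (closed_closed hε hθ).trans (closed_closed hδ hθ).symm
  rw [pow_succ, pow_succ, pow_eq] at pow_succ_eq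
  exact hne (mul_left_cancel₀ (pow_ne_zero _ hδ.sign_ne_zero) pow_succ_eq)

theorem sssdCovers_of_sign_pow_ne (hP : Primitive (Underlying S)) {f g : ℕ → Fin n} {p q a b : ℕ}
    (hf : IsCycleSeq (Underlying S) f p) (hg : IsCycleSeq (Underlying S) g q)
    (hlen : a * p = b * q) (hne : walkSign S f p ^ a ≠ walkSign S g q ^ b) :
    SSSDCovers S Finset.univ (a * p + 2 * (n - 1)) := by
  obtain ⟨u, hu⟩ := hf.cycleSupport_nonempty
  obtain ⟨v, hv⟩ := hg.cycleSupport_nonempty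
  obtain ⟨d, hd, huv⟩ := hP.stronglyConnected.exists_hasWalk_le u v
  have pair := HasSSSD.of_closed_walks (hf.signedWalk hu) (hg.signedWalk hv) huv hlen hne
  exact (pair.sssdCovers hP).mono hP (by omega)

theorem IsCycleSeq.sign_eq_of_not_sssdCovers {f g : ℕ → Fin n} {p : ℕ}
    (hf : IsCycleSeq (Underlying S) f p) (hn : 6 ≤ n) (hP : Primitive (Underlying S))
    (hS : ¬ SSSDCovers S Finset.univ (n * (n - 1) - 4)) (hg : IsCycleSeq (Underlying S) g p) :
    walkSign S f p = walkSign S g p := by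
  by_contra hne
  refine hS ((sssdCovers_of_sign_pow_ne hP hf hg (a := 1) (b := 1) rfl
    (by simpa only [pow_one] using hne)).mono hP ?_)
  have := hf.length_le
  obtain ⟨m, rfl⟩ := Nat.exists_eq_add_of_le' hn
  simp only [Nat.add_one_sub_one]
  lia

namespace DistinguishedCyclePair

variable {f g : ℕ → Fin n} {p q : ℕ}

theorem symm (h : DistinguishedCyclePair S f p g q) : DistinguishedCyclePair S g q f p :=
  ⟨h.right, h.left, h.sign_pow_ne.symm⟩

theorem hasSSSD (h : DistinguishedCyclePair S f p g q) {z : Fin n} (hf : z ∈ cycleSupport f p)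
    (hg : z ∈ cycleSupport g q) : HasSSSD S z z (q * p) :=
  .of_closed_walks (h.left.signedWalk hf) (h.right.signedWalk hg) (.refl _ z) (mul_comm q p)
    h.sign_pow_ne

theorem sssdCovers_of_hamiltonian (h : DistinguishedCyclePair S f n g q)
    (hP : Primitive (Underlying S)) : SSSDCovers S Finset.univ (q * n + (n - q)) := by
  intro v
  obtain ⟨z, hz, hzv⟩ := h.right.walkCovers hP.stronglyConnected (d := n - q) (by omega) v
  exact ⟨z, Finset.mem_univ z,
    (h.hasSSSD (h.left.mem_cycleSupport_of_hamiltonian z) hz).append hzv⟩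

theorem sssdCovers_of_hamiltonian_of_length_pred (h : DistinguishedCyclePair S f n g (n - 1))
    (hP : Primitive (Underlying S)) {X : Finset (Fin n)} (hX : X.Nonempty) :
    SSSDCovers S X ((n - X.card) * (n - 1) + (n - 1) * n + 1) := by
  intro v
  obtain ⟨w, hw, hwv⟩ := h.right.walkCovers hP.stronglyConnected (d := 1) (by omega) v
  obtain ⟨x, hx, hxw⟩ := hP.exists_mem_hasWalk h.right.1 (h.right.hasWalk hw) hX
  have pair := h.hasSSSD (h.left.mem_cycleSupport_of_hamiltonian w) hw
  exact ⟨x, hx, (pair.prepend hxw).append hwv⟩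

theorem sssdCovers_of_length_lt (h : DistinguishedCyclePair S f p g q) (hn : 6 ≤ n)
    (hP : Primitive (Underlying S)) (hqp : q < p) (hp : p < n) :
    SSSDCovers S Finset.univ (n * (n - 1) - 4) := by
  by_cases meet : ∃ z, z ∈ cycleSupport f p ∧ z ∈ cycleSupport g q
  · obtain ⟨z, hzf, hzg⟩ := meet
    refine ((h.hasSSSD hzf hzg).sssdCovers hP).mono hP ?_
    have : q * p ≤ (n - 2) * (n - 1) := Nat.mul_le_mul (by omega) (by omega)
    have : n * (n - 1) = (n - 2) * (n - 1) + 2 * (n - 1) := by rw [← add_mul]; congr 1; omega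
    omega
  · have disjoint : Disjoint (cycleSupport f p) (cycleSupport g q) :=
      Finset.disjoint_left.2 fun z hzf hzg => meet ⟨z, hzf, hzg⟩
    have length_add_le : p + q ≤ n := by
      simpa [Finset.card_union_of_disjoint disjoint, h.left.card_cycleSupport,
        h.right.card_cycleSupport] using Finset.card_le_univ (cycleSupport f p ∪ cycleSupport g q)
    refine (sssdCovers_of_sign_pow_ne hP h.left h.right (mul_comm q p) h.sign_pow_ne).mono hP ?_
    have amgm : 4 * (q * p) ≤ n * n := by nlinarith [sq_nonneg ((q : ℤ) - p)]
    obtain ⟨m, rfl⟩ := Nat.exists_eq_add_of_le' hn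
    simp only [Nat.add_one_sub_one]
    lia

theorem length_eq_and_length_eq_pred (h : DistinguishedCyclePair S f p g q) (hn : 6 ≤ n)
    (hP : Primitive (Underlying S)) (hS : ¬ SSSDCovers S Finset.univ (n * (n - 1) - 4))
    (hqp : q ≤ p) : p = n ∧ q = n - 1 := by
  obtain ⟨m, rfl⟩ := Nat.exists_eq_add_of_le' hn
  rcases hqp.eq_or_lt with rfl | hlt
  · have hne : walkSign S f q ≠ walkSign S g q := fun heq => h.sign_pow_ne (by rw [heq])
    exact absurd (h.left.sign_eq_of_not_sssdCovers hn hP hS h.right) hne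
  rcases h.left.length_le.lt_or_eq with hp | rfl
  · exact absurd (h.sssdCovers_of_length_lt hn hP hlt hp) hS
  refine ⟨rfl, by_contra fun hq => hS ((h.sssdCovers_of_hamiltonian hP).mono hP ?_)⟩
  have : q * (m + 5) ≤ (m + 4) * (m + 5) := Nat.mul_le_mul_right _ (by omega)
  simp only [Nat.add_one_sub_one]
  lia

end DistinguishedCyclePair

theorem exists_distinguishedCyclePair_hamiltonian (hn : 6 ≤ n) (hP : Primitive (Underlying S))
    (hN : NonPowerful S) (hS : ¬ SSSDCovers S Finset.univ (n * (n - 1) - 4)) :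
    ∃ f g, DistinguishedCyclePair S f n g (n - 1) := by
  obtain ⟨f, p, g, q, h⟩ := exists_distinguishedCyclePair hP hN
  rcases le_total q p with hqp | hpq
  · obtain ⟨rfl, rfl⟩ := h.length_eq_and_length_eq_pred hn hP hS hqp
    exact ⟨f, g, h⟩
  · obtain ⟨rfl, rfl⟩ := h.symm.length_eq_and_length_eq_pred hn hP hS hpq
    exact ⟨g, f, h.symm⟩

/-! ### Short cycles -/

theorem pow_pred_eq_pow {M : Type*} [CommMonoid M] {η γ ε : M} {n q j : ℕ} (hn : n = q + j + 1)
    (hη : η ^ q = ε ^ n) (hγ : γ ^ q = ε ^ (n - 1)) (h : γ ^ (j + 1) = η ^ j * ε) :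
    η ^ (n - 1) = γ ^ n := by
  subst hn
  rw [Nat.add_sub_cancel] at hγ ⊢
  calc η ^ (q + j) = ε ^ (q + j + 1) * η ^ j := by rw [pow_add, hη]
    _ = ε ^ (q + j) * (η ^ j * ε) := by rw [pow_succ, mul_assoc, mul_comm ε]
    _ = γ ^ (q + j + 1) := by rw [← h, ← hγ, ← pow_add, add_assoc]

namespace DistinguishedCyclePair

variable {f g : ℕ → Fin n}

theorem two_le_length (h : DistinguishedCyclePair S f n g (n - 1)) {c : ℕ → Fin n} {q : ℕ}
    (hc : IsCycleSeq (Underlying S) c q) (hη : walkSign S f n ^ q = walkSign S c q ^ n)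
    (hγ : walkSign S g (n - 1) ^ q = walkSign S c q ^ (n - 1)) : 2 ≤ q := by
  by_contra! hq
  obtain rfl : q = 1 := by have := hc.1; omega
  rw [pow_one] at hη hγ
  exact h.sign_pow_ne (by rw [hη, hγ, ← pow_mul, ← pow_mul, mul_comm])

theorem sssdCovers_of_length_lt_pred (h : DistinguishedCyclePair S f n g (n - 1))
    (hP : Primitive (Underlying S)) {c : ℕ → Fin n} {q : ℕ}
    (hc : IsCycleSeq (Underlying S) c q) (hq : q < n - 1)
    (hη : walkSign S f n ^ q = walkSign S c q ^ n)
    (hγ : walkSign S g (n - 1) ^ q = walkSign S c q ^ (n - 1)) :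
    SSSDCovers S Finset.univ ((n - 1) * (n - 1)) := by
  have two_le : 2 ≤ q := h.two_le_length hc hη hγ
  obtain ⟨j, hj⟩ := Nat.exists_eq_add_of_le hq.le
  have hn : n = q + j + 1 := by omega
  obtain ⟨z, hz⟩ : (cycleSupport c q ∩ cycleSupport g (n - 1)).Nonempty := by
    refine Finset.inter_nonempty_of_card_lt_card_add_card (Finset.subset_univ _)
      (Finset.subset_univ _) ?_
    rw [hc.card_cycleSupport, h.right.card_cycleSupport, Finset.card_univ, Fintype.card_fin]
    omega
  obtain ⟨hzc, hzg⟩ := Finset.mem_inter.1 hz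
  have turns_g := (h.right.signedWalk hzg).iterate (j + 1)
  have turns_f := ((h.left.signedWalk (h.left.mem_cycleSupport_of_hamiltonian z)).iterate j).append
    (hc.signedWalk hzc)
  have length_eq : j * n + q = (j + 1) * (n - 1) := by rw [hj, hn]; ring
  rw [length_eq] at turns_f
  have sign_ne : walkSign S g (n - 1) ^ (j + 1) ≠ walkSign S f n ^ j * walkSign S c q :=
    fun heq => h.sign_pow_ne (pow_pred_eq_pow hn hη hγ heq)
  have pair : HasSSSD S z z ((j + 1) * (n - 1)) := hasSSSD_iff.2 ⟨_, _, turns_g, turns_f, sign_ne⟩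
  refine (pair.sssdCovers hP).mono hP ?_
  rw [← Nat.succ_mul]
  exact Nat.mul_le_mul_right _ (by omega)

theorem pred_le_length (h : DistinguishedCyclePair S f n g (n - 1)) (hn : 6 ≤ n)
    (hP : Primitive (Underlying S)) (hS : ¬ SSSDCovers S Finset.univ (n * (n - 1) - 4))
    {c : ℕ → Fin n} {q : ℕ} (hc : IsCycleSeq (Underlying S) c q) : n - 1 ≤ q := by
  by_contra! hq
  have hη : walkSign S f n ^ q = walkSign S c q ^ n := by
    by_contra hne
    have := (⟨h.left, hc, hne⟩ : DistinguishedCyclePair S f n c q).length_eq_and_length_eq_pred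
      hn hP hS (by omega)
    omega
  have hγ : walkSign S g (n - 1) ^ q = walkSign S c q ^ (n - 1) := by
    by_contra hne
    have := (⟨h.right, hc, hne⟩ : DistinguishedCyclePair S g (n - 1) c q)
      |>.length_eq_and_length_eq_pred hn hP hS hq.le
    omega
  refine hS ((h.sssdCovers_of_length_lt_pred hP hc hq hη hγ).mono hP ?_)
  obtain ⟨m, rfl⟩ := Nat.exists_eq_add_of_le' hn
  simp only [Nat.add_one_sub_one]
  lia

theorem sign_eq_or_le_length (h : DistinguishedCyclePair S f n g (n - 1)) (hn : 6 ≤ n)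
    (hP : Primitive (Underlying S)) (hS : ¬ SSSDCovers S Finset.univ (n * (n - 1) - 4))
    {u : Fin n} {l : ℕ} {ε : ℤ} (hu : SignedWalk S u u l ε) (hl : 0 < l) :
    (l = n - 1 ∧ ε = walkSign S g (n - 1)) ∨ n ≤ l := by
  have trichotomy : (l = 0 ∧ ε = 1) ∨ (l = n - 1 ∧ ε = walkSign S g (n - 1)) ∨ n ≤ l := by
    refine hu.closed_induction
      (P := fun l ε => (l = 0 ∧ ε = 1) ∨ (l = n - 1 ∧ ε = walkSign S g (n - 1)) ∨ n ≤ l)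
      (.inl ⟨rfl, rfl⟩) ?_ ?_
    · rintro l₁ l₂ ε₁ ε₂ (⟨rfl, rfl⟩ | h₁) (⟨rfl, rfl⟩ | h₂)
      · simp
      · simpa using .inr h₂
      · simpa using .inr h₁
      · exact .inr (.inr (by omega))
    · intro c q hc
      rcases (h.pred_le_length hn hP hS hc).eq_or_lt with rfl | hq
      · exact .inr (.inl ⟨rfl, hc.sign_eq_of_not_sssdCovers hn hP hS h.right⟩)
      · exact .inr (.inr (by omega))
  exact trichotomy.resolve_left fun hzero => hl.ne' hzero.1

end DistinguishedCyclePair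

/-! ### Hamiltonian digraphs without short cycles -/

/-- Every closed walk of positive length, equivalently every cycle, has length at least `n - 1`. -/
def NoShortClosedWalk (A : Fin n → Fin n → Prop) : Prop :=
  ∀ {u l}, 0 < l → HasWalk A u u l → n - 1 ≤ l

/-- An enumeration, periodic with period `n`, of the `n` vertices of `A` along a Hamiltonian
cycle. Unlike `IsCycleSeq`, it may be restarted at any vertex. -/
structure HamiltonianEnum (A : Fin n → Fin n → Prop) (g : ℕ → Fin n) : Prop where
  arc : ∀ i, A (g i) (g (i + 1))
  eq_iff : ∀ {i j}, g i = g j ↔ i ≡ j [MOD n]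

theorem IsCycleSeq.hamiltonianEnum {f : ℕ → Fin n} (hf : IsCycleSeq A f n) :
    HamiltonianEnum A fun i => f (i % n) := by
  obtain ⟨hn, closed, arcs, inj⟩ := hf
  refine ⟨fun i => ?_, fun {i j} => ⟨inj _ (i.mod_lt hn) _ (j.mod_lt hn), congrArg f⟩⟩
  have arc := arcs _ (i.mod_lt hn)
  rcases (show i % n + 1 ≤ n from i.mod_lt hn).eq_or_lt with hlast | hlt
  · have wrap : (i + 1) % n = 0 := by rw [← Nat.mod_add_mod, hlast, Nat.mod_self]
    rwa [hlast, closed, ← wrap] at arc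
  · rwa [← Nat.mod_eq_of_lt hlt, Nat.mod_add_mod] at arc

namespace HamiltonianEnum

variable {g : ℕ → Fin n}

theorem shift (hg : HamiltonianEnum A g) (c : ℕ) : HamiltonianEnum A fun i => g (c + i) :=
  ⟨fun i => hg.arc (c + i), hg.eq_iff.trans (Nat.ModEq.add_iff_left rfl)⟩

theorem add_period (hg : HamiltonianEnum A g) (i : ℕ) : g (i + n) = g i :=
  hg.eq_iff.2 (Nat.add_modEq_right)

theorem hasWalk (hg : HamiltonianEnum A g) (i d : ℕ) : HasWalk A (g i) (g (i + d)) d :=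
  .segment fun j _ _ => hg.arc j

theorem exists_lt_add_eq (hg : HamiltonianEnum A g) (i : ℕ) (v : Fin n) :
    ∃ d < n, g (i + d) = v := by
  have inj : Function.Injective fun d : Fin n => g (i + d) := fun d d' heq =>
    Fin.ext (((hg.shift i).eq_iff.1 heq).eq_of_lt_of_lt d.isLt d'.isLt)
  obtain ⟨d, hd⟩ := Finite.surjective_of_injective inj v
  exact ⟨d, d.isLt, hd⟩

theorem eq_succ_or_eq_add_two (hg : HamiltonianEnum A g) (hA : NoShortClosedWalk A) {i : ℕ}
    {v : Fin n} (arc : A (g i) v) :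
    v = g (i + 1) ∨ v = g (i + 2) := by
  obtain ⟨d, hd, rfl⟩ := hg.exists_lt_add_eq (i + 1) v
  have back := hg.hasWalk (i + 1 + d) (n - 1 - d)
  rw [show i + 1 + d + (n - 1 - d) = i + n by omega, hg.add_period] at back
  have := hA (by omega) ((HasWalk.single arc).trans back)
  obtain rfl | rfl : d = 0 ∨ d = 1 := by omega
  · exact .inl rfl
  · exact .inr rfl

theorem not_chord_of_chord (hg : HamiltonianEnum A g) (hA : NoShortClosedWalk A) {i j : ℕ}
    (hj : j + 4 ≤ n) (chord : A (g i) (g (i + 2))) : ¬ A (g (i + 2 + j)) (g (i + 2 + j + 2)) := by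
  intro chord'
  have back := hg.hasWalk (i + 2 + j + 2) (n - (j + 4))
  rw [show i + 2 + j + 2 + (n - (j + 4)) = i + n by omega, hg.add_period] at back
  have closed := (((HasWalk.single chord).trans (hg.hasWalk _ j)).trans (.single chord')).trans back
  have := hA (by omega) closed
  omega

theorem exists_forall_chord_le (hg : HamiltonianEnum A g) (hA : NoShortClosedWalk A) (hn : 4 ≤ n) :
    ∃ c, ∀ x < n, A (g (c + x)) (g (c + x + 2)) → n - 2 ≤ x := by
  by_cases none : ∀ i, ¬ A (g i) (g (i + 2))
  · exact ⟨0, fun x _ hx => absurd hx (none _)⟩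
  push Not at none
  obtain ⟨i, chord, not_before⟩ :
      ∃ i, A (g i) (g (i + 2)) ∧ ¬ A (g (i + (n - 1))) (g (i + (n - 1) + 2)) := by
    obtain ⟨i, chord⟩ := none
    by_cases before : A (g (i + (n - 1))) (g (i + (n - 1) + 2))
    · refine ⟨_, before, fun before_before => ?_⟩
      refine hg.not_chord_of_chord hA (j := 0) hn before_before ?_
      rw [show i + (n - 1) + (n - 1) + 2 + 0 = i + n + n by omega, add_right_comm _ n 2,
        add_right_comm _ n 2]
      simpa only [hg.add_period] using chord
    · exact ⟨i, chord, before⟩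
  refine ⟨i + 2, fun x hx chord' => ?_⟩
  by_contra! hlt
  rcases Nat.lt_or_ge n (x + 4) with hlast | hle
  · obtain rfl : x = n - 3 := by omega
    rw [show i + 2 + (n - 3) = i + (n - 1) by omega] at chord'
    exact not_before chord'
  · exact hg.not_chord_of_chord hA hle chord chord'

theorem exists_forall_arc (hg : HamiltonianEnum A g) (hA : NoShortClosedWalk A) (hn : 4 ≤ n) :
    ∃ h, HamiltonianEnum A h ∧
      ∀ x < n, ∀ v, A (h x) v → v = h (x + 1) ∨ (n - 2 ≤ x ∧ v = h (x + 2)) := by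
  obtain ⟨c, hc⟩ := hg.exists_forall_chord_le hA hn
  refine ⟨_, hg.shift c, fun x hx v arc => ?_⟩
  rcases (hg.shift c).eq_succ_or_eq_add_two hA arc with rfl | rfl
  · exact .inl rfl
  · exact .inr ⟨hc x hx arc, rfl⟩

end HamiltonianEnum

/-! ### Counting turns -/

/-- A Hamiltonian enumeration of a signed digraph whose only further arcs are the chords from the
last two vertices that skip one vertex, and all of whose closed walks of length `n - 1` have
sign `γ`. -/
structure TwoChordEnum (S : Fin n → Fin n → ℤ) (h : ℕ → Fin n) (γ : ℤ) : Prop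
    extends HamiltonianEnum (Underlying S) h where
  eq_of_arc : ∀ x < n, ∀ v, Underlying S (h x) v → v = h (x + 1) ∨ (n - 2 ≤ x ∧ v = h (x + 2))
  sign_eq : ∀ {u ε}, SignedWalk S u u (n - 1) ε → ε = γ

namespace TwoChordEnum

variable {h : ℕ → Fin n} {γ : ℤ}

theorem exists_turns_of_arc (hh : TwoChordEnum S h γ) (hn : 2 ≤ n) {x : ℕ} (hx : x < n) {v : Fin n}
    (arc : Underlying S (h x) v) :
    ∃ y < n, ∃ a b, h y = v ∧ y + n * a + (n - 1) * b = x + 1 ∧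
      walkSign S h x * S (h x) v = walkSign S h y * (walkSign S h n ^ a * γ ^ b) := by
  have sign_succ (i : ℕ) : walkSign S h (i + 1) = walkSign S h i * S (h i) (h (i + 1)) :=
    Finset.prod_range_succ _ _
  rcases hh.eq_of_arc x hx v arc with rfl | ⟨hlast, rfl⟩
  · rcases (show x + 1 ≤ n from hx).eq_or_lt with hlast | hlt
    · refine ⟨0, by omega, 1, 0, ?_, by omega, ?_⟩
      · simpa only [hlast, zero_add] using (hh.add_period 0).symm
      · rw [← sign_succ, hlast]
        simp [walkSign]
    · exact ⟨x + 1, hlt, 0, 0, rfl, by omega, by simp [sign_succ]⟩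
  · obtain ⟨y, hy⟩ : ∃ y, x + 2 = y + n := ⟨x + 2 - n, by omega⟩
    rw [hy, hh.add_period] at arc ⊢
    refine ⟨y, by omega, 0, 1, rfl, by omega, ?_⟩
    obtain rfl : x = y + (n - 2) := by omega
    have closed := (SignedWalk.segment (i := y) (d := n - 2) fun j _ _ => hh.arc j).append
      (.single arc)
    rw [show n - 2 + 1 = n - 1 by omega] at closed
    rw [walkSign_add, mul_assoc, hh.sign_eq closed]
    ring

theorem exists_turns (hh : TwoChordEnum S h γ) (hn : 2 ≤ n) {x : ℕ} (hx : x < n) {v : Fin n} {l : ℕ}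
    {ε : ℤ} (hv : SignedWalk S (h x) v l ε) :
    ∃ y < n, ∃ a b, h y = v ∧ y + n * a + (n - 1) * b = x + l ∧
      walkSign S h x * ε = walkSign S h y * (walkSign S h n ^ a * γ ^ b) := by
  obtain ⟨u, hu⟩ : ∃ u, u = h x := ⟨_, rfl⟩
  rw [← hu] at hv
  induction hv generalizing x with
  | nil => exact ⟨x, hx, 0, 0, hu.symm, by omega, by simp⟩
  | cons arc _ ih =>
    subst hu
    obtain ⟨y, hy, a, b, rfl, length_eq, sign_eq⟩ := hh.exists_turns_of_arc hn hx arc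
    obtain ⟨z, hz, a', b', rfl, length_eq', sign_eq'⟩ := ih hy rfl
    refine ⟨z, hz, a + a', b + b', rfl, by lia, ?_⟩
    rw [← mul_assoc, sign_eq, mul_right_comm, sign_eq', pow_add, pow_add]
    ring

end TwoChordEnum

theorem le_of_mul_add_mul_eq {p q a b a' b' : ℕ} (hpq : p.Coprime q)
    (heq : p * a + q * b = p * a' + q * b') (hlt : a < a') : q ≤ a' := by
  have modEq : p * a ≡ p * a' [MOD q] := by
    simpa [Nat.ModEq] using congrArg (· % q) heq
  have dvd : q ∣ a' - a :=
    (Nat.modEq_iff_dvd' hlt.le).1 (Nat.ModEq.cancel_left_of_coprime hpq.symm modEq)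
  exact (Nat.le_of_dvd (by omega) dvd).trans (Nat.sub_le _ _)

theorem not_succ_mul_add_mul_eq {N j i a b : ℕ} (hj : j ≤ N) (hi : i = 0 ∨ (j < i ∧ i ≤ N)) :
    (N + 1) * (a + 1) + N * b ≠ i + N * j := by
  intro heq
  have heq : a + 1 + N * (a + 1 + b) = i + N * j := by rw [← heq]; ring
  rcases Nat.lt_trichotomy j (a + 1 + b) with hlt | rfl | hlt
  · have := Nat.mul_le_mul_left N (Nat.succ_le_of_lt hlt)
    rw [Nat.mul_succ] at this
    omega
  · omega
  · have := Nat.mul_le_mul_left N (Nat.succ_le_of_lt hlt)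
    rw [Nat.mul_succ] at this
    omega

theorem turns_unique {N j i a b a' b' : ℕ} (hj : j ≤ N) (hi : i = 0 ∨ (j < i ∧ i ≤ N))
    (h : (N + 1) * (a + 1) + N * b = i + (N + 1) * N + N * j)
    (h' : (N + 1) * (a' + 1) + N * b' = i + (N + 1) * N + N * j) : a = a' ∧ b = b' := by
  wlog hle : a ≤ a' generalizing a b a' b'
  · exact (this h' h (le_of_not_ge hle)).imp Eq.symm Eq.symm
  rcases hle.eq_or_lt with rfl | hlt
  · have hN : 0 < N := Nat.pos_of_ne_zero (by rintro rfl; omega)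
    exact ⟨rfl, Nat.eq_of_mul_eq_mul_left hN (by omega)⟩
  · have hN : N ≤ a' := le_of_mul_add_mul_eq (p := N + 1) (b := b) (b' := b') (by simp) (by lia) hlt
    obtain ⟨c, rfl⟩ := Nat.exists_eq_add_of_le' hN
    exact absurd (by lia) (not_succ_mul_add_mul_eq (a := c) (b := b') hj hi)

namespace TwoChordEnum

variable {h : ℕ → Fin n} {γ : ℤ}

theorem not_hasSSSD (hh : TwoChordEnum S h γ) (hn : 2 ≤ n) {i j : ℕ} (hin : i < n)
    (hj : j ≤ n - 1) (hi : i = 0 ∨ j < i) :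
    ¬ HasSSSD S (h i) (h (n - 1)) (n * (n - 1) + j * (n - 1) - 1) := by
  intro pair
  obtain ⟨N, rfl⟩ : ∃ N, n = N + 1 := ⟨n - 1, by omega⟩
  rw [Nat.add_sub_cancel] at pair hj
  have turns {ε : ℤ} (hε : SignedWalk S (h i) (h N) ((N + 1) * N + j * N - 1) ε) :
      ∃ a b, (N + 1) * (a + 1) + N * b = i + (N + 1) * N + N * j ∧
        walkSign S h i * ε = walkSign S h N * (walkSign S h (N + 1) ^ a * γ ^ b) := by
    obtain ⟨y, hy, a, b, y_eq, length_eq, sign_eq⟩ := hh.exists_turns hn hin hε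
    obtain rfl : y = N := (hh.eq_iff.1 y_eq).eq_of_lt_of_lt hy N.lt_succ_self
    refine ⟨a, b, ?_, sign_eq⟩
    have : 0 < (y + 1) * y := Nat.mul_pos y.succ_pos (by omega)
    rw [Nat.add_sub_cancel] at length_eq
    lia
  obtain ⟨ε, δ, hε, hδ, hne⟩ := hasSSSD_iff.1 pair
  obtain ⟨a, b, length_eq, sign_eq⟩ := turns hε
  obtain ⟨a', b', length_eq', sign_eq'⟩ := turns hδ
  obtain ⟨rfl, rfl⟩ := turns_unique hj (by omega) length_eq length_eq'
  have start_ne : walkSign S h i ≠ 0 :=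
    (SignedWalk.of_forall_arc fun j (_ : j < i) => hh.arc j).sign_ne_zero
  exact hne (mul_left_cancel₀ start_ne (sign_eq.trans sign_eq'.symm))

theorem exists_card_eq_not_sssdCovers (hh : TwoChordEnum S h γ) (hn : 2 ≤ n) {k : ℕ} (hk : 1 ≤ k)
    (hkn : k ≤ n) :
    ∃ X : Finset (Fin n), X.card = k ∧
      ¬ SSSDCovers S X (n * (n - 1) + (n - k) * (n - 1) - 1) := by
  let I : Finset ℕ := insert 0 (Finset.Ioo (n - k) n)
  have mem_I {i : ℕ} (hi : i ∈ I) : i < n ∧ (i = 0 ∨ n - k < i) := by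
    simp only [I, Finset.mem_insert, Finset.mem_Ioo] at hi
    omega
  have inj : Set.InjOn h I := fun i hi j hj heq =>
    (hh.eq_iff.1 heq).eq_of_lt_of_lt (mem_I hi).1 (mem_I hj).1
  refine ⟨I.image h, ?_, fun covers => ?_⟩
  · rw [Finset.card_image_of_injOn inj, Finset.card_insert_of_notMem (by simp), Nat.card_Ioo]
    omega
  obtain ⟨x, hx, pair⟩ := covers (h (n - 1))
  obtain ⟨i, hi, rfl⟩ := Finset.mem_image.1 hx
  exact hh.not_hasSSSD hn (mem_I hi).1 (by omega) (mem_I hi).2 pair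

end TwoChordEnum

theorem DistinguishedCyclePair.exists_twoChordEnum {f g : ℕ → Fin n}
    (h : DistinguishedCyclePair S f n g (n - 1)) (hn : 6 ≤ n) (hP : Primitive (Underlying S))
    (hS : ¬ SSSDCovers S Finset.univ (n * (n - 1) - 4)) :
    ∃ e, TwoChordEnum S e (walkSign S g (n - 1)) := by
  have no_short : NoShortClosedWalk (Underlying S) := fun {u l} hl hu => by
    obtain ⟨_, hu⟩ := hasWalk_underlying_iff.1 hu
    have := h.sign_eq_or_le_length hn hP hS hu hl
    omega
  obtain ⟨e, he, eq_of_arc⟩ := h.left.hamiltonianEnum.exists_forall_arc no_short (by omega)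
  refine ⟨e, he, eq_of_arc, fun {u ε} hu => ?_⟩
  rcases h.sign_eq_or_le_length hn hP hS hu (by omega) with ⟨-, sign_eq⟩ | hle
  · exact sign_eq
  · omega

/-! ### Upper bases -/

theorem upperBase_le {k B : ℕ}
    (h : ∀ X : Finset (Fin n), X.card = k → SSSDCovers S X B) : upperBase S k ≤ B :=
  csSup_le' fun _ ⟨X, hX, hbase⟩ => hbase ▸ Nat.sInf_le (h X hX)

theorem setBase_le_upperBase (S : Fin n → Fin n → ℤ) (X : Finset (Fin n)) :
    setBase S X ≤ upperBase S X.card :=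
  have finite : {e | ∃ Y : Finset (Fin n), Y.card = X.card ∧ setBase S Y = e}.Finite :=
    (Set.finite_range (setBase S)).subset fun _ ⟨Y, _, hY⟩ => ⟨Y, hY⟩
  le_csSup finite.bddAbove ⟨X, rfl, rfl⟩

theorem lt_setBase (hP : Primitive (Underlying S)) {X : Finset (Fin n)} {p m : ℕ}
    (hp : SSSDCovers S X p) (hm : ¬ SSSDCovers S X m) : m < setBase S X := by
  have covers : SSSDCovers S X (setBase S X) := Nat.sInf_mem (s := {p | SSSDCovers S X p}) ⟨p, hp⟩
  exact lt_of_not_ge fun hle => hm (covers.mono hP hle)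

theorem upperBase_le_of_sssdCovers_univ (hP : Primitive (Underlying S)) {k m : ℕ} (hk : 1 ≤ k)
    (h : SSSDCovers S Finset.univ m) : upperBase S k ≤ (n - k) * (n - 1) + 1 + m :=
  upperBase_le fun _ hX => hX ▸ h.prepend (hP.walkCovers (Finset.card_pos.1 (hX ▸ hk)))

theorem upperBase_of_not_sssdCovers_univ (hn : 6 ≤ n) {k : ℕ} (hk : 1 ≤ k) (hkn : k ≤ n)
    (hP : Primitive (Underlying S)) (hN : NonPowerful S)
    (hS : ¬ SSSDCovers S Finset.univ (n * (n - 1) - 4)) :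
    n * (n - 1) + (n - k) * (n - 1) ≤ upperBase S k ∧
      upperBase S k ≤ n * (n - 1) + (n - k) * (n - 1) + 1 := by
  obtain ⟨f, g, h⟩ := exists_distinguishedCyclePair_hamiltonian hn hP hN hS
  have covers {X : Finset (Fin n)} (hX : X.card = k) :
      SSSDCovers S X (n * (n - 1) + (n - k) * (n - 1) + 1) := by
    have := h.sssdCovers_of_hamiltonian_of_length_pred hP (Finset.card_pos.1 (hX ▸ hk))
    rwa [hX, mul_comm (n - 1) n, add_comm ((n - k) * (n - 1))] at this
  refine ⟨?_, upperBase_le fun X hX => covers hX⟩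
  obtain ⟨e, he⟩ := h.exists_twoChordEnum hn hP hS
  obtain ⟨X, hX, not_covers⟩ := he.exists_card_eq_not_sssdCovers (by omega) hk hkn
  have lt_base := lt_setBase hP (covers hX) not_covers
  have base_le := setBase_le_upperBase S X
  rw [hX] at base_le
  omega

theorem upperBase_dichotomy (hn : 6 ≤ n) {k : ℕ} (hk : 1 ≤ k) (hkn : k ≤ n)
    (hP : Primitive (Underlying S)) (hN : NonPowerful S) :
    upperBase S k ≤ (2 * n - k) * (n - 1) - 3 ∨
      (2 * n - k) * (n - 1) ≤ upperBase S k ∧ upperBase S k ≤ (2 * n - k) * (n - 1) + 1 := by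
  have split : (2 * n - k) * (n - 1) = n * (n - 1) + (n - k) * (n - 1) := by
    rw [← add_mul, show 2 * n - k = n + (n - k) by omega]
  have large : 6 * 5 ≤ n * (n - 1) := Nat.mul_le_mul hn (by omega)
  rw [split]
  by_cases hS : SSSDCovers S Finset.univ (n * (n - 1) - 4)
  · have := upperBase_le_of_sssdCovers_univ hP hk hS
    exact .inl (by omega)
  · exact .inr (upperBase_of_not_sssdCovers_univ hn hk hkn hP hN hS)

theorem upperBase_bound_and_gap_general {n : ℕ} (hn : 6 ≤ n) (k : ℕ) (hk1 : 1 ≤ k) (hkn : k ≤ n) :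
    (∀ S : Fin n → Fin n → ℤ, Primitive (Underlying S) → NonPowerful S →
      upperBase S k ≤ (2 * n - k) * (n - 1) + 1) ∧
    (∀ t : ℕ, (2 * n - k) * (n - 1) - 3 < t → t < (2 * n - k) * (n - 1) →
      ∀ S : Fin n → Fin n → ℤ, Primitive (Underlying S) → NonPowerful S → upperBase S k ≠ t) := by
  refine ⟨fun S hP hN => ?_, fun t hlt htl S hP hN => ?_⟩
  all_goals
    have := upperBase_dichotomy hn hk1 hkn hP hN
    omega

/-- Theorem 3.4 (parts (1) and (4)): for `n ≥ 6` and `1 ≤ k ≤ n`, every primitive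
non-powerful signed digraph of order `n` satisfies `L(S,k) ≤ (2n-k)(n-1) + 1`,
and no value `t` with `(2n-k)(n-1) - 3 < t < (2n-k)(n-1)` is attained as `L(S,k)`. -/
theorem upperBase_bound_and_gap {n : ℕ} (hn : 6 ≤ n) (k : ℕ) (hk1 : 1 ≤ k) (hkn : k ≤ n) :
    (∀ S : Fin n → Fin n → ℤ, SignPattern S → Primitive (Underlying S) →
      NonPowerful S → upperBase S k ≤ (2 * n - k) * (n - 1) + 1) ∧
    (∀ t : ℕ, (2 * n - k) * (n - 1) - 3 < t → t < (2 * n - k) * (n - 1) →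
      ∀ S : Fin n → Fin n → ℤ, SignPattern S → Primitive (Underlying S) →
        NonPowerful S → upperBase S k ≠ t) := by
  obtain ⟨bound, gap⟩ := upperBase_bound_and_gap_general hn k hk1 hkn
  exact ⟨fun S _ => bound S, fun t hlt htl S _ => gap t hlt htl S⟩
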